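/- arXiv:1808.04199 — 2 statements merged into one kernel-verified Lean document; each statement's English description precedes it below -/
import Mathlib

section
/- Let π be a permutation of length n and let π^rev denote its reversal (π^rev_j = π_{n+1−j}). Then (i,i+1) is an up oriented separated pair in π if and only if (i,i+1) is a down oriented separated pair in π^rev. Consequently, the reversal map restricts to a bijection from the set of permutations of length n with no separated pairs and 1 in position k onto the same set with 1 in position n−k+1, and, for every t ≥ 0, to a bijection from the set of up-oriented permutations of length n with rev-tier t and 1 in position k onto the set of down-oriented permutations of length n with rev-tier t+1 and 1 in position n−k+1. -/
/-!  Common definitions: permutation patterns, separated pairs, rev-tier. -/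

/-- `π` contains the pattern `σ`. -/
def Pattern.Contains {n k : ℕ} (π : Equiv.Perm (Fin n)) (σ : Equiv.Perm (Fin k)) : Prop :=
  ∃ α : Fin k → Fin n, StrictMono α ∧ ∀ i j : Fin k, (π (α i) < π (α j) ↔ σ i < σ j)

/-- `π` avoids the pattern `σ`. -/
def Pattern.Avoids {n k : ℕ} (π : Equiv.Perm (Fin n)) (σ : Equiv.Perm (Fin k)) : Prop :=
  ¬ Pattern.Contains π σ

/-- The pair of values `(a, a+1)` (0-indexed) is an up oriented separated pair in `σ`:
`a` precedes `a+1` and some value `> a+1` occurs strictly between them. -/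
def UpSepPair {n : ℕ} (σ : Equiv.Perm (Fin n)) (a : Fin n) : Prop :=
  ∃ hb : (a : ℕ) + 1 < n,
    σ.symm a < σ.symm ⟨(a : ℕ) + 1, hb⟩ ∧
    ∃ p : Fin n, σ.symm a < p ∧ p < σ.symm ⟨(a : ℕ) + 1, hb⟩ ∧ (a : ℕ) + 1 < (σ p : ℕ)

/-- The pair of values `(a, a+1)` (0-indexed) is a down oriented separated pair in `σ`. -/
def DownSepPair {n : ℕ} (σ : Equiv.Perm (Fin n)) (a : Fin n) : Prop :=
  ∃ hb : (a : ℕ) + 1 < n,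
    σ.symm ⟨(a : ℕ) + 1, hb⟩ < σ.symm a ∧
    ∃ p : Fin n, σ.symm ⟨(a : ℕ) + 1, hb⟩ < p ∧ p < σ.symm a ∧ (a : ℕ) + 1 < (σ p : ℕ)

/-- `(a, a+1)` is a separated pair (of either orientation). -/
def SepPair {n : ℕ} (σ : Equiv.Perm (Fin n)) (a : Fin n) : Prop :=
  UpSepPair σ a ∨ DownSepPair σ a

/-- `σ` has no separated pairs. -/
def NoSepPairs {n : ℕ} (σ : Equiv.Perm (Fin n)) : Prop :=
  ∀ a : Fin n, ¬ SepPair σ a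

/-- `f` lists the lower values of an increasing sequence of separated pairs in `σ` with
alternating orientations; the first pair is down oriented iff `firstDown = true`. -/
def AltChain {n : ℕ} (σ : Equiv.Perm (Fin n)) (firstDown : Bool) {t : ℕ}
    (f : Fin t → Fin n) : Prop :=
  StrictMono f ∧ ∀ j : Fin t,
    if ((j : ℕ) % 2 = 0) ↔ (firstDown = true) then DownSepPair σ (f j)
    else UpSepPair σ (f j)

/-- The rev-tier of `σ`: the maximal length of an increasing sequence of separated pairs
with alternating orientations beginning with a down oriented pair. -/
noncomputable def revTier {n : ℕ} (σ : Equiv.Perm (Fin n)) : ℕ :=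
  sSup {t : ℕ | ∃ f : Fin t → Fin n, AltChain σ true f}

/-- Maximal length of an increasing alternating sequence of separated pairs (either
starting orientation). -/
noncomputable def maxAltLen {n : ℕ} (σ : Equiv.Perm (Fin n)) : ℕ :=
  sSup {t : ℕ | ∃ b : Bool, ∃ f : Fin t → Fin n, AltChain σ b f}

/-- `σ` has a separated pair and every maximum-length increasing alternating sequence of
separated pairs begins with an up oriented pair. -/
def UpOriented {n : ℕ} (σ : Equiv.Perm (Fin n)) : Prop :=
  1 ≤ maxAltLen σ ∧ ¬ ∃ f : Fin (maxAltLen σ) → Fin n, AltChain σ true f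

/-- `σ` has a separated pair and every maximum-length increasing alternating sequence of
separated pairs begins with a down oriented pair. -/
def DownOriented {n : ℕ} (σ : Equiv.Perm (Fin n)) : Prop :=
  1 ≤ maxAltLen σ ∧ ¬ ∃ f : Fin (maxAltLen σ) → Fin n, AltChain σ false f

/-- `σ` is a basis element of the class of permutations of rev-tier at most `t`. -/
def IsBasisElt (t : ℕ) {n : ℕ} (σ : Equiv.Perm (Fin n)) : Prop :=
  t + 1 ≤ revTier σ ∧
  ∀ (m : ℕ) (τ : Equiv.Perm (Fin m)), m < n → Pattern.Contains σ τ → revTier τ ≤ t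

/-- The entry `1` of `σ` is in (1-indexed) position `k`. -/
def onePos {n : ℕ} (σ : Equiv.Perm (Fin n)) (k : ℕ) : Prop :=
  ∀ h : 0 < n, (σ.symm ⟨0, h⟩ : ℕ) + 1 = k

/-- `η(n,k)`: number of permutations of length `n` with no separated pairs and entry `1`
in position `k`. -/
noncomputable def eta (n k : ℕ) : ℕ :=
  Nat.card {σ : Equiv.Perm (Fin n) // NoSepPairs σ ∧ onePos σ k}

/-- `η(n)`: number of permutations of length `n` with no separated pairs. -/
noncomputable def etaTot (n : ℕ) : ℕ :=
  Nat.card {σ : Equiv.Perm (Fin n) // NoSepPairs σ}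

/-- `μ_U(n,t,k)`: number of up-oriented permutations of length `n`, rev-tier `t`, with
entry `1` in position `k`. -/
noncomputable def muU (n t k : ℕ) : ℕ :=
  Nat.card {σ : Equiv.Perm (Fin n) // UpOriented σ ∧ revTier σ = t ∧ onePos σ k}

/-- `μ_D(n,t,k)`: number of down-oriented permutations of length `n`, rev-tier `t`, with
entry `1` in position `k`. -/
noncomputable def muD (n t k : ℕ) : ℕ :=
  Nat.card {σ : Equiv.Perm (Fin n) // DownOriented σ ∧ revTier σ = t ∧ onePos σ k}

/-- `π` is a down-up alternating permutation: `π₁ > π₂ < π₃ > ⋯`. -/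
def DownUp {n : ℕ} (π : Equiv.Perm (Fin n)) : Prop :=
  ∀ (i : ℕ) (h : i + 1 < n),
    if i % 2 = 0 then π ⟨i + 1, h⟩ < π ⟨i, by omega⟩
    else π ⟨i, by omega⟩ < π ⟨i + 1, h⟩

/-- The Entringer number `E_{n,k}`: down-up alternating permutations of length `n` whose
first entry is `k` (1-indexed value). -/
noncomputable def entringer (n k : ℕ) : ℕ :=
  Nat.card {π : Equiv.Perm (Fin n) // DownUp π ∧ ∀ h : 0 < n, (π ⟨0, h⟩ : ℕ) + 1 = k}

/-- The reversal of a permutation: `(revP σ) j = σ (n + 1 - j)`. -/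
def revP {n : ℕ} (σ : Equiv.Perm (Fin n)) : Equiv.Perm (Fin n) :=
  (Fin.revPerm).trans σ

/-- The explicit maximal rev-tier permutation of length `n` (0-indexed values):
the even entries of `{1,…,n}` in decreasing order, then `n`, then the odd entries in
increasing order. -/
def maxPermVal (n : ℕ) (i : Fin n) : Fin n :=
  if h1 : (i : ℕ) < (n - 1) / 2 then
    ⟨2 * ((n - 1) / 2) - 2 * (i : ℕ) - 1, by omega⟩
  else if h2 : (i : ℕ) = (n - 1) / 2 then
    ⟨n - 1, by have := i.isLt; omega⟩
  else
    ⟨2 * ((i : ℕ) - (n - 1) / 2 - 1), by have := i.isLt; omega⟩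

def p231 : Equiv.Perm (Fin 3) :=
  ⟨![1, 2, 0], ![2, 0, 1], by decide, by decide⟩

def p132 : Equiv.Perm (Fin 3) :=
  ⟨![0, 2, 1], ![0, 2, 1], by decide, by decide⟩

def p2413 : Equiv.Perm (Fin 4) :=
  ⟨![1, 3, 0, 2], ![2, 0, 3, 1], by decide, by decide⟩

def p2431 : Equiv.Perm (Fin 4) :=
  ⟨![1, 3, 2, 0], ![3, 0, 2, 1], by decide, by decide⟩

def p23154 : Equiv.Perm (Fin 5) :=
  ⟨![1, 2, 0, 4, 3], ![2, 0, 1, 4, 3], by decide, by decide⟩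

def p24153 : Equiv.Perm (Fin 5) :=
  ⟨![1, 3, 0, 4, 2], ![2, 0, 4, 1, 3], by decide, by decide⟩

def p24513 : Equiv.Perm (Fin 5) :=
  ⟨![1, 3, 4, 0, 2], ![3, 0, 4, 1, 2], by decide, by decide⟩

def p24531 : Equiv.Perm (Fin 5) :=
  ⟨![1, 3, 4, 2, 0], ![4, 0, 3, 1, 2], by decide, by decide⟩

def p42513 : Equiv.Perm (Fin 5) :=
  ⟨![3, 1, 4, 0, 2], ![3, 1, 4, 0, 2], by decide, by decide⟩

def p42531 : Equiv.Perm (Fin 5) :=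
  ⟨![3, 1, 4, 2, 0], ![4, 1, 3, 0, 2], by decide, by decide⟩

def p231564 : Equiv.Perm (Fin 6) :=
  ⟨![1, 2, 0, 4, 5, 3], ![2, 0, 1, 5, 3, 4], by decide, by decide⟩

def p261453 : Equiv.Perm (Fin 6) :=
  ⟨![1, 5, 0, 3, 4, 2], ![2, 0, 5, 3, 4, 1], by decide, by decide⟩

def p523164 : Equiv.Perm (Fin 6) :=
  ⟨![4, 1, 2, 0, 5, 3], ![3, 1, 2, 5, 0, 4], by decide, by decide⟩

def p562413 : Equiv.Perm (Fin 6) :=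
  ⟨![4, 5, 1, 3, 0, 2], ![4, 2, 5, 3, 0, 1], by decide, by decide⟩

def p562431 : Equiv.Perm (Fin 6) :=
  ⟨![4, 5, 1, 3, 2, 0], ![5, 2, 4, 3, 0, 1], by decide, by decide⟩

def p6723154 : Equiv.Perm (Fin 7) :=
  ⟨![5, 6, 1, 2, 0, 4, 3], ![4, 2, 3, 6, 5, 0, 1], by decide, by decide⟩

def p4321 : Equiv.Perm (Fin 4) :=
  ⟨![3, 2, 1, 0], ![3, 2, 1, 0], by decide, by decide⟩

def p4213 : Equiv.Perm (Fin 4) :=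
  ⟨![3, 1, 0, 2], ![2, 1, 3, 0], by decide, by decide⟩

/-!
Reversal mirrors positions, hence it exchanges up and down oriented separated pairs and flips the
starting orientation of alternating chains. Let `D` and `U` be the maximal lengths of the chains of
`σ` that start down and up. Chains can be truncated, so `σ` is up-oriented iff `D < U` and
down-oriented iff `U < D`. Dropping the first pair of a chain flips its starting orientation, so
`D` and `U` differ by at most one, and an up-oriented `σ` has `U = D + 1`. Reversal swaps `D` and
`U`, and `D` is the rev-tier.
-/

section Reversal

variable {n : ℕ}

theorem revP_apply (σ : Equiv.Perm (Fin n)) (p : Fin n) : revP σ p = σ p.rev := rfl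

theorem revP_symm_apply (σ : Equiv.Perm (Fin n)) (a : Fin n) :
    (revP σ).symm a = (σ.symm a).rev := rfl

theorem revP_involutive : Function.Involutive (revP (n := n)) := fun σ =>
  Equiv.ext fun p => by rw [revP_apply, revP_apply, Fin.rev_rev]

theorem bijOn_revP {S T : Set (Equiv.Perm (Fin n))} (h : ∀ σ, revP σ ∈ T ↔ σ ∈ S) :
    Set.BijOn (fun σ : Equiv.Perm (Fin n) => revP σ) S T := by
  obtain rfl : revP ⁻¹' T = S := Set.ext h
  exact revP_involutive.bijective.bijOn_preimage

theorem downSepPair_revP (σ : Equiv.Perm (Fin n)) (a : Fin n) :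
    DownSepPair (revP σ) a ↔ UpSepPair σ a := by
  refine exists_congr fun hb => and_congr Fin.rev_lt_rev ?_
  rw [← Fin.revPerm.exists_congr_right]
  refine exists_congr fun p => ?_
  simp only [revP_apply, revP_symm_apply, Fin.revPerm_apply, Fin.rev_lt_rev, Fin.rev_rev]
  exact and_left_comm

theorem upSepPair_revP (σ : Equiv.Perm (Fin n)) (a : Fin n) :
    UpSepPair (revP σ) a ↔ DownSepPair σ a := by
  rw [← downSepPair_revP, revP_involutive]

theorem noSepPairs_revP (σ : Equiv.Perm (Fin n)) : NoSepPairs (revP σ) ↔ NoSepPairs σ := by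
  simp only [NoSepPairs, SepPair, upSepPair_revP, downSepPair_revP, or_comm]

theorem onePos_revP {k : ℕ} (hkn : k ≤ n) (σ : Equiv.Perm (Fin n)) :
    onePos (revP σ) (n - k + 1) ↔ onePos σ k := by
  refine forall_congr' fun h => ?_
  rw [revP_symm_apply, Fin.val_rev]
  have := (σ.symm ⟨0, h⟩).isLt
  omega

theorem altChain_revP {t : ℕ} (σ : Equiv.Perm (Fin n)) (b : Bool) (f : Fin t → Fin n) :
    AltChain (revP σ) b f ↔ AltChain σ (!b) f := by
  refine and_congr_right fun _ => forall_congr' fun j => ?_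
  rw [upSepPair_revP, downSepPair_revP]
  by_cases hj : (j : ℕ) % 2 = 0 <;> cases b <;> simp [hj]

end Reversal

namespace AltChain

variable {n t : ℕ} {σ : Equiv.Perm (Fin n)} {b : Bool}

theorem length_le {f : Fin t → Fin n} (h : AltChain σ b f) : t ≤ n := by
  simpa using Fintype.card_le_of_injective f h.1.injective

theorem comp_castLE {s : ℕ} {f : Fin t → Fin n} (h : AltChain σ b f) (hst : s ≤ t) :
    AltChain σ b (f ∘ Fin.castLE hst) :=
  ⟨h.1.comp (Fin.strictMono_castLE hst), fun j => h.2 (Fin.castLE hst j)⟩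

theorem comp_succ {f : Fin (t + 1) → Fin n} (h : AltChain σ b f) :
    AltChain σ (!b) (f ∘ Fin.succ) := by
  refine ⟨h.1.comp Fin.strictMono_succ, fun j => ?_⟩
  have hj := h.2 j.succ
  rw [Fin.val_succ] at hj
  rcases Nat.mod_two_eq_zero_or_one (j : ℕ) with hpar | hpar <;> cases b <;>
    simpa [Nat.add_mod, hpar] using hj

end AltChain

section ChainLength

variable {n : ℕ}

/-- The maximal length of an increasing sequence of separated pairs of `σ` with alternating
orientations and prescribed starting orientation: down if `b = true`, up if `b = false`. The
rev-tier is the case `b = true`. -/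
noncomputable def maxAltLenFrom (σ : Equiv.Perm (Fin n)) (b : Bool) : ℕ :=
  sSup {t : ℕ | ∃ f : Fin t → Fin n, AltChain σ b f}

theorem revTier_eq_maxAltLenFrom (σ : Equiv.Perm (Fin n)) :
    revTier σ = maxAltLenFrom σ true := rfl

theorem exists_altChain_iff_le_maxAltLenFrom {t : ℕ} (σ : Equiv.Perm (Fin n)) (b : Bool) :
    (∃ f : Fin t → Fin n, AltChain σ b f) ↔ t ≤ maxAltLenFrom σ b := by
  let lengths : Set ℕ := {t | ∃ f : Fin t → Fin n, AltChain σ b f}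
  have hbdd : BddAbove lengths := ⟨n, fun _ ⟨_, hf⟩ => hf.length_le⟩
  have hne : lengths.Nonempty := ⟨0, Fin.elim0, fun i => i.elim0, fun i => i.elim0⟩
  refine ⟨fun h => le_csSup hbdd h, fun ht => ?_⟩
  obtain ⟨f, hf⟩ : maxAltLenFrom σ b ∈ lengths := Nat.sSup_mem hne hbdd
  exact ⟨_, hf.comp_castLE ht⟩

theorem maxAltLenFrom_le_not_add_one (σ : Equiv.Perm (Fin n)) (b : Bool) :
    maxAltLenFrom σ b ≤ maxAltLenFrom σ (!b) + 1 := by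
  refine le_of_forall_le fun t ht => ?_
  cases t with
  | zero => exact Nat.zero_le _
  | succ t =>
    obtain ⟨f, hf⟩ := (exists_altChain_iff_le_maxAltLenFrom σ b).mpr ht
    exact Nat.succ_le_succ <|
      (exists_altChain_iff_le_maxAltLenFrom σ (!b)).mp ⟨_, hf.comp_succ⟩

theorem maxAltLenFrom_revP (σ : Equiv.Perm (Fin n)) (b : Bool) :
    maxAltLenFrom (revP σ) b = maxAltLenFrom σ (!b) := by
  simp only [maxAltLenFrom, altChain_revP]

theorem maxAltLen_eq_max (σ : Equiv.Perm (Fin n)) :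
    maxAltLen σ = max (maxAltLenFrom σ false) (maxAltLenFrom σ true) := by
  have lengths_eq : {t : ℕ | ∃ b : Bool, ∃ f : Fin t → Fin n, AltChain σ b f} =
      Set.Iic (max (maxAltLenFrom σ false) (maxAltLenFrom σ true)) := by
    ext t
    simp only [Set.mem_ofPred_eq, exists_altChain_iff_le_maxAltLenFrom, Bool.exists_bool,
      Set.mem_Iic, le_max_iff]
  rw [maxAltLen, lengths_eq, csSup_Iic]

theorem upOriented_iff_maxAltLenFrom_lt (σ : Equiv.Perm (Fin n)) :
    UpOriented σ ↔ maxAltLenFrom σ true < maxAltLenFrom σ false := by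
  rw [UpOriented, exists_altChain_iff_le_maxAltLenFrom, maxAltLen_eq_max]
  omega

theorem downOriented_iff_maxAltLenFrom_lt (σ : Equiv.Perm (Fin n)) :
    DownOriented σ ↔ maxAltLenFrom σ false < maxAltLenFrom σ true := by
  rw [DownOriented, exists_altChain_iff_le_maxAltLenFrom, maxAltLen_eq_max]
  omega

theorem downOriented_revP (σ : Equiv.Perm (Fin n)) : DownOriented (revP σ) ↔ UpOriented σ := by
  rw [downOriented_iff_maxAltLenFrom_lt, upOriented_iff_maxAltLenFrom_lt, maxAltLenFrom_revP,
    maxAltLenFrom_revP, Bool.not_false, Bool.not_true]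

theorem UpOriented.revTier_revP {σ : Equiv.Perm (Fin n)} (h : UpOriented σ) :
    revTier (revP σ) = revTier σ + 1 := by
  rw [revTier_eq_maxAltLenFrom, revTier_eq_maxAltLenFrom, maxAltLenFrom_revP]
  exact le_antisymm (maxAltLenFrom_le_not_add_one σ false)
    ((upOriented_iff_maxAltLenFrom_lt σ).mp h)

end ChainLength

/-- reversal turns up oriented separated pairs into down oriented ones,
and induces the stated bijections. -/
theorem reversal_bijections (n : ℕ) :
    (∀ (σ : Equiv.Perm (Fin n)) (a : Fin n), UpSepPair σ a ↔ DownSepPair (revP σ) a) ∧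
    (∀ k : ℕ, 1 ≤ k → k ≤ n →
      Set.BijOn (fun σ : Equiv.Perm (Fin n) => revP σ)
        {σ | NoSepPairs σ ∧ onePos σ k}
        {σ | NoSepPairs σ ∧ onePos σ (n - k + 1)}) ∧
    (∀ (t k : ℕ), 1 ≤ k → k ≤ n →
      Set.BijOn (fun σ : Equiv.Perm (Fin n) => revP σ)
        {σ | UpOriented σ ∧ revTier σ = t ∧ onePos σ k}
        {σ | DownOriented σ ∧ revTier σ = t + 1 ∧ onePos σ (n - k + 1)}) := by
  refine ⟨fun σ a => (downSepPair_revP σ a).symm, fun k _ hkn => bijOn_revP fun σ => ?_,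
    fun t k _ hkn => bijOn_revP fun σ => ?_⟩
  · exact and_congr (noSepPairs_revP σ) (onePos_revP hkn σ)
  · simp only [Set.mem_ofPred_eq, downOriented_revP, onePos_revP hkn]
    refine and_congr_right fun hup => ?_
    rw [hup.revTier_revP, add_left_inj]
end

section
/- The following recurrences hold for all n ≥ 1 and 1 ≤ k ≤ n+1 (all sums over i range over 1 ≤ i ≤ n): η(n+1,k) = η(n,k) + η(n,k−1); μ_U(n+1,0,k) = Σ_{i ≥ k+1} η(n,i) + Σ_{i ≥ k−1} μ_U(n,0,i); for t ≥ 1, μ_U(n+1,t,k) = Σ_{i ≥ k+1} μ_D(n,t,i) + Σ_{i ≥ k−1} μ_U(n,t,i); μ_D(n+1,1,k) = Σ_{i ≤ k−2} η(n,i) + Σ_{i ≤ k} μ_D(n,1,i); and for t ≥ 2, μ_D(n+1,t,k) = Σ_{i ≤ k−2} μ_U(n,t−2,i) + Σ_{i ≤ k} μ_D(n,t,i). -/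
/-!
Deleting the entry `1` from a permutation of length `n + 1` leaves a permutation `τ` of length `n`,
so every permutation arises by inserting a new minimum at some position `p` (`insertMin p τ`). The
insertion shifts the separated pairs of `τ` by one and keeps their orientations; the only new
candidate is the pair `(1, 2)`, whose status depends only on `p` and on the position `q` of the
entry `1` of `τ`.

Let `D` and `U` be the maximal lengths of alternating chains beginning with a down, respectively up,
oriented pair. Removing the first pair of a chain gives `|D - U| ≤ 1`, and the orientation of the
smallest separated pair decides which of the two is larger, so that `D = U` only if there is no
separated pair. A new up oriented pair `(1, 2)` replaces `U` by `D + 1` and keeps `D`, a down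
oriented one replaces `D` by `U + 1` and keeps `U`. The recurrences count the permutations `τ`
according to `q`.
-/

section

open Equiv (Perm)

variable {n : ℕ}

/-! ### Inserting a new minimum -/

section InsertMin

/-- The permutation obtained from `τ` by raising every value by one and inserting the new
smallest value `0` at (0-indexed) position `p`. -/
def insertMin (p : Fin (n + 1)) (τ : Perm (Fin n)) : Perm (Fin (n + 1)) :=
  (finSuccEquiv' p).trans ((Equiv.optionCongr τ).trans (finSuccEquiv' 0).symm)

variable (p : Fin (n + 1)) (τ : Perm (Fin n))

lemma insertMin_self : insertMin p τ p = 0 := by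
  simp [insertMin]

lemma insertMin_succAbove (j : Fin n) : insertMin p τ (p.succAbove j) = (τ j).succ := by
  simp [insertMin]

lemma insertMin_symm_zero : (insertMin p τ).symm 0 = p := by
  rw [Equiv.symm_apply_eq, insertMin_self]

lemma insertMin_symm_succ (a : Fin n) :
    (insertMin p τ).symm a.succ = p.succAbove (τ.symm a) := by
  rw [Equiv.symm_apply_eq, insertMin_succAbove, Equiv.apply_symm_apply]

lemma insertMin_injective : Function.Injective (insertMin p) := by
  intro τ τ' h
  ext j : 1
  apply Fin.succ_injective
  rw [← insertMin_succAbove p, h, insertMin_succAbove]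

lemma exists_insertMin_eq (σ : Perm (Fin (n + 1))) : ∃ τ, insertMin (σ.symm 0) τ = σ := by
  set p := σ.symm 0
  have apply_p : σ p = 0 := σ.apply_symm_apply 0
  have apply_ne_zero (j : Fin n) : σ (p.succAbove j) ≠ 0 := fun hj =>
    p.succAbove_ne j (σ.injective (hj.trans apply_p.symm))
  have pred_injective : Function.Injective fun j => (σ (p.succAbove j)).pred (apply_ne_zero j) :=
    fun j j' hjj => by simpa using hjj
  refine ⟨Equiv.ofBijective _ (Finite.injective_iff_bijective.1 pred_injective), ?_⟩
  ext x : 1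
  rcases Fin.eq_self_or_eq_succAbove p x with rfl | ⟨j, rfl⟩
  · rw [insertMin_self, apply_p]
  · rw [insertMin_succAbove, Equiv.ofBijective_apply, Fin.succ_pred]

end InsertMin

/-! ### Separated pairs -/

section SeparatedPairs

/-- Some entry of `σ` at a position strictly between `i` and `j` has a value larger than `v`. Both
orientations of separated pairs are instances of it, with the two positions exchanged. -/
def ExceedsBetween (σ : Perm (Fin n)) (v : ℕ) (i j : Fin n) : Prop :=
  ∃ x, i < x ∧ x < j ∧ v < (σ x : ℕ)

/-- `(a, a+1)` is a separated pair of `σ` of the given orientation: down for `true`, up for `false`,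
as for the starting orientation in `AltChain`. -/
def OrientedSepPair (σ : Perm (Fin n)) : Bool → Fin n → Prop
  | true => DownSepPair σ
  | false => UpSepPair σ

lemma upSepPair_iff {σ : Perm (Fin n)} {a : Fin n} :
    UpSepPair σ a ↔ ∃ hb : (a : ℕ) + 1 < n,
      ExceedsBetween σ (a + 1) (σ.symm a) (σ.symm ⟨a + 1, hb⟩) :=
  exists_congr fun _ => and_iff_right_of_imp fun ⟨_, h₁, h₂, _⟩ => h₁.trans h₂

lemma downSepPair_iff {σ : Perm (Fin n)} {a : Fin n} :
    DownSepPair σ a ↔ ∃ hb : (a : ℕ) + 1 < n,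
      ExceedsBetween σ (a + 1) (σ.symm ⟨a + 1, hb⟩) (σ.symm a) :=
  exists_congr fun _ => and_iff_right_of_imp fun ⟨_, h₁, h₂, _⟩ => h₁.trans h₂

lemma sepPair_iff_exists_orientedSepPair {σ : Perm (Fin n)} {a : Fin n} :
    SepPair σ a ↔ ∃ b, OrientedSepPair σ b a := by
  simp only [SepPair, OrientedSepPair, Bool.exists_bool]

lemma OrientedSepPair.not_flip {σ : Perm (Fin n)} {b : Bool} {a : Fin n}
    (h : OrientedSepPair σ b a) : ¬ OrientedSepPair σ (!b) a := by
  have not_up_and_down : UpSepPair σ a → ¬ DownSepPair σ a :=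
    fun ⟨_, hup, _⟩ ⟨_, hdown, _⟩ => hup.asymm hdown
  cases b
  · exact not_up_and_down h
  · exact fun hup => not_up_and_down hup h

lemma exceedsBetween_insertMin_succAbove (p : Fin (n + 1)) (τ : Perm (Fin n)) (v : ℕ)
    (i j : Fin n) :
    ExceedsBetween (insertMin p τ) (v + 1) (p.succAbove i) (p.succAbove j) ↔
      ExceedsBetween τ v i j := by
  simp [ExceedsBetween, Fin.exists_iff_succAbove p, insertMin_self, insertMin_succAbove]

lemma orientedSepPair_insertMin_succ (p : Fin (n + 1)) (τ : Perm (Fin n)) (b : Bool)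
    (a : Fin n) : OrientedSepPair (insertMin p τ) b a.succ ↔ OrientedSepPair τ b a := by
  have symm_succ_succ (hb : (a : ℕ) + 1 < n) :
      (insertMin p τ).symm ⟨(a : ℕ) + 1 + 1, Nat.succ_lt_succ hb⟩ =
        p.succAbove (τ.symm ⟨a + 1, hb⟩) := insertMin_symm_succ p τ ⟨a + 1, hb⟩
  cases b <;>
    simp only [OrientedSepPair, upSepPair_iff, downSepPair_iff, insertMin_symm_succ,
      Fin.val_succ, Nat.add_lt_add_iff_right] <;>
    exact exists_congr fun hb => by
      rw [symm_succ_succ hb, exceedsBetween_insertMin_succAbove]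

lemma one_lt_apply {σ : Perm (Fin (n + 2))} {x : Fin (n + 2)} (h₀ : x ≠ σ.symm 0)
    (h₁ : x ≠ σ.symm 1) : 1 < (σ x : ℕ) := by
  rw [Ne, Equiv.eq_symm_apply, Fin.ext_iff] at h₀ h₁
  simp only [Fin.val_zero, Fin.val_one] at h₀ h₁
  omega

lemma exceedsBetween_iff_of_forall_lt {σ : Perm (Fin n)} {v : ℕ} {i j : Fin n}
    (h : ∀ x, i < x → x < j → v < (σ x : ℕ)) : ExceedsBetween σ v i j ↔ (i : ℕ) + 1 < j := by
  refine ⟨fun ⟨x, hix, hxj, _⟩ => by omega, fun hij => ?_⟩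
  have hlt : i < ⟨i + 1, by omega⟩ := Nat.lt_succ_self _
  exact ⟨⟨i + 1, by omega⟩, hlt, hij, h _ hlt hij⟩

lemma upSepPair_zero_iff {σ : Perm (Fin (n + 2))} :
    UpSepPair σ 0 ↔ (σ.symm 0 : ℕ) + 1 < σ.symm 1 := by
  rw [upSepPair_iff, exists_prop_of_true (by simp)]
  exact exceedsBetween_iff_of_forall_lt fun x h₀ h₁ => one_lt_apply h₀.ne' h₁.ne

lemma downSepPair_zero_iff {σ : Perm (Fin (n + 2))} :
    DownSepPair σ 0 ↔ (σ.symm 1 : ℕ) + 1 < σ.symm 0 := by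
  rw [downSepPair_iff, exists_prop_of_true (by simp)]
  exact exceedsBetween_iff_of_forall_lt fun x h₁ h₀ => one_lt_apply h₀.ne h₁.ne'

lemma insertMin_symm_one (p : Fin (n + 2)) (τ : Perm (Fin (n + 1))) :
    (insertMin p τ).symm 1 = p.succAbove (τ.symm 0) :=
  insertMin_symm_succ p τ 0

lemma upSepPair_insertMin_zero (p : Fin (n + 2)) (τ : Perm (Fin (n + 1))) :
    UpSepPair (insertMin p τ) 0 ↔ (p : ℕ) < τ.symm 0 := by
  rw [upSepPair_zero_iff, insertMin_symm_zero, insertMin_symm_one]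
  simp only [Fin.succAbove, Fin.lt_def, Fin.val_castSucc]
  split_ifs <;> grind

lemma downSepPair_insertMin_zero (p : Fin (n + 2)) (τ : Perm (Fin (n + 1))) :
    DownSepPair (insertMin p τ) 0 ↔ (τ.symm 0 : ℕ) + 1 < p := by
  rw [downSepPair_zero_iff, insertMin_symm_zero, insertMin_symm_one]
  simp only [Fin.succAbove, Fin.lt_def, Fin.val_castSucc]
  split_ifs <;> grind

end SeparatedPairs

/-! ### Alternating chains -/

section Chains

/-- `σ` has an alternating chain of length `t` whose first pair has orientation `b`. -/
def HasAltChain (σ : Perm (Fin n)) (b : Bool) (t : ℕ) : Prop :=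
  ∃ f : Fin t → Fin n, AltChain σ b f

/-- The maximal length of an alternating chain of `σ` whose first pair has orientation `b`; the
rev-tier is `tier σ true`. -/
noncomputable def tier (σ : Perm (Fin n)) (b : Bool) : ℕ :=
  sSup {t : ℕ | HasAltChain σ b t}

variable {σ : Perm (Fin n)} {b : Bool} {s t : ℕ}

lemma revTier_eq_tier : revTier σ = tier σ true := rfl

lemma altChain_iff {f : Fin t → Fin n} :
    AltChain σ b f ↔
      StrictMono f ∧ ∀ j : Fin t, OrientedSepPair σ (decide ((j : ℕ) % 2 = 0) == b) (f j) := by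
  refine and_congr_right fun _ => forall_congr' fun j => ?_
  by_cases hj : (j : ℕ) % 2 = 0 <;> cases b <;> simp [hj, OrientedSepPair]

lemma altChain_cons_iff {a : Fin n} {f : Fin t → Fin n} :
    AltChain σ b (Fin.cons a f : Fin (t + 1) → Fin n) ↔
      OrientedSepPair σ b a ∧ (∀ j, a < f j) ∧ AltChain σ (!b) f := by
  have flip_parity (j : ℕ) : (decide ((j + 1) % 2 = 0) == b) = (decide (j % 2 = 0) == !b) := by
    rcases Nat.mod_two_eq_zero_or_one j with h | h <;> cases b <;> simp [Nat.add_mod, h]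
  simp only [altChain_iff, Fin.strictMono_cons, Fin.forall_fin_succ, Fin.cons_zero, Fin.cons_succ,
    Fin.val_zero, Fin.val_succ, flip_parity, Nat.zero_mod, decide_true, Bool.true_beq]
  tauto

lemma hasAltChain_zero : HasAltChain σ b 0 :=
  ⟨Fin.elim0, fun i => i.elim0, fun i => i.elim0⟩

lemma hasAltChain_succ_iff :
    HasAltChain σ b (t + 1) ↔ ∃ (a : Fin n) (f : Fin t → Fin n),
      OrientedSepPair σ b a ∧ (∀ j, a < f j) ∧ AltChain σ (!b) f := by
  simp only [HasAltChain, Fin.exists_fin_succ_pi, altChain_cons_iff]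

lemma HasAltChain.le_length (h : HasAltChain σ b t) : t ≤ n := by
  obtain ⟨f, hf, -⟩ := h
  simpa using Fintype.card_le_of_injective f hf.injective

lemma HasAltChain.mono (h : HasAltChain σ b t) (hst : s ≤ t) : HasAltChain σ b s := by
  obtain ⟨f, hf, h⟩ := h
  exact ⟨f ∘ Fin.castLE hst, hf.comp (Fin.strictMono_castLE hst), fun j => h (Fin.castLE hst j)⟩

lemma hasAltChain_iff_le_tier : HasAltChain σ b t ↔ t ≤ tier σ b := by
  have bdd : BddAbove {t : ℕ | HasAltChain σ b t} := ⟨n, fun _ h => h.le_length⟩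
  exact ⟨fun h => le_csSup bdd h, (Nat.sSup_mem ⟨0, hasAltChain_zero⟩ bdd).mono⟩

lemma tier_le_tier_not_add_one (σ : Perm (Fin n)) (b : Bool) : tier σ b ≤ tier σ (!b) + 1 := by
  rcases h : tier σ b with _ | t
  · exact Nat.zero_le _
  · obtain ⟨-, f, -, -, hf⟩ := hasAltChain_succ_iff.1 (hasAltChain_iff_le_tier.2 h.ge)
    exact Nat.succ_le_succ (hasAltChain_iff_le_tier.1 ⟨f, hf⟩)

lemma tier_pos_iff : 0 < tier σ b ↔ ∃ a, OrientedSepPair σ b a := by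
  rw [Nat.lt_iff_add_one_le, ← hasAltChain_iff_le_tier, hasAltChain_succ_iff]
  exact exists_congr fun a => ⟨fun ⟨_, h, _⟩ => h, fun h =>
    ⟨Fin.elim0, h, fun j => j.elim0, fun j => j.elim0, fun j => j.elim0⟩⟩

lemma tier_not_add_one_le_of_minimal {a : Fin n} (ha : OrientedSepPair σ b a)
    (hmin : Minimal (SepPair σ) a) : tier σ (!b) + 1 ≤ tier σ b := by
  obtain ⟨f, hf⟩ : HasAltChain σ (!b) (tier σ (!b)) := hasAltChain_iff_le_tier.2 le_rfl
  refine hasAltChain_iff_le_tier.1 (hasAltChain_succ_iff.2 ⟨a, f, ha, fun j => ?_, hf⟩)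
  obtain ⟨hf_mono, hf_sep⟩ := altChain_iff.1 hf
  have first_sep : OrientedSepPair σ (!b) (f ⟨0, j.pos⟩) := by simpa using hf_sep ⟨0, j.pos⟩
  have ne_first : a ≠ f ⟨0, j.pos⟩ := fun h => ha.not_flip (h ▸ first_sep)
  calc a < f ⟨0, j.pos⟩ :=
        (not_lt.1 (hmin.not_lt (sepPair_iff_exists_orientedSepPair.2 ⟨_, first_sep⟩))).lt_of_ne
          ne_first
    _ ≤ f j := hf_mono.monotone (Nat.zero_le _)

end Chains

/-! ### Orientation of a permutation -/

section Orientation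

variable (σ : Perm (Fin n))

lemma maxAltLen_eq_max_tier : maxAltLen σ = max (tier σ true) (tier σ false) := by
  have lengths_eq_Iic : {t : ℕ | ∃ b : Bool, HasAltChain σ b t} =
      Set.Iic (max (tier σ true) (tier σ false)) := by
    ext t
    simp [hasAltChain_iff_le_tier, or_comm]
  exact (congrArg sSup lengths_eq_Iic).trans csSup_Iic

lemma upOriented_iff : UpOriented σ ↔ tier σ false = tier σ true + 1 := by
  have h : UpOriented σ ↔ 1 ≤ maxAltLen σ ∧ ¬ maxAltLen σ ≤ tier σ true :=
    and_congr_right' (not_congr hasAltChain_iff_le_tier)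
  have hle := tier_le_tier_not_add_one σ false
  simp only [Bool.not_false] at hle
  rw [h, maxAltLen_eq_max_tier]
  omega

lemma downOriented_iff : DownOriented σ ↔ tier σ true = tier σ false + 1 := by
  have h : DownOriented σ ↔ 1 ≤ maxAltLen σ ∧ ¬ maxAltLen σ ≤ tier σ false :=
    and_congr_right' (not_congr hasAltChain_iff_le_tier)
  have hle := tier_le_tier_not_add_one σ true
  simp only [Bool.not_true] at hle
  rw [h, maxAltLen_eq_max_tier]
  omega

lemma noSepPairs_iff : NoSepPairs σ ↔ tier σ true = 0 ∧ tier σ false = 0 := by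
  have h (b : Bool) : tier σ b = 0 ↔ ∀ a, ¬ OrientedSepPair σ b a := by
    rw [← not_exists, ← tier_pos_iff, Nat.pos_iff_ne_zero, not_not]
  simp only [NoSepPairs, sepPair_iff_exists_orientedSepPair, not_exists, h]
  rw [forall_comm, Bool.forall_bool, and_comm]

lemma noSepPairs_or_upOriented_or_downOriented :
    NoSepPairs σ ∨ UpOriented σ ∨ DownOriented σ := by
  refine or_iff_not_imp_left.2 fun h => ?_
  have exists_sepPair : ∃ a, SepPair σ a := by
    simpa only [NoSepPairs, not_forall, not_not] using h
  obtain ⟨a, hmin⟩ := exists_minimal_of_wellFoundedLT (SepPair σ) exists_sepPair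
  obtain ⟨b, hb⟩ := sepPair_iff_exists_orientedSepPair.1 hmin.prop
  have tier_eq : tier σ b = tier σ (!b) + 1 :=
    (tier_le_tier_not_add_one σ b).antisymm (tier_not_add_one_le_of_minimal hb hmin)
  cases b
  · exact .inl ((upOriented_iff σ).2 tier_eq)
  · exact .inr ((downOriented_iff σ).2 tier_eq)

lemma not_upOriented_and_revTier_eq_zero_iff :
    ¬ UpOriented σ ∧ revTier σ = 0 ↔ NoSepPairs σ := by
  have h := noSepPairs_or_upOriented_or_downOriented σ
  simp only [noSepPairs_iff, upOriented_iff, downOriented_iff, revTier_eq_tier] at h ⊢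
  omega

lemma not_upOriented_and_revTier_eq_iff {t : ℕ} (ht : 1 ≤ t) :
    ¬ UpOriented σ ∧ revTier σ = t ↔ DownOriented σ ∧ revTier σ = t := by
  have h := noSepPairs_or_upOriented_or_downOriented σ
  simp only [noSepPairs_iff, upOriented_iff, downOriented_iff, revTier_eq_tier] at h ⊢
  omega

lemma not_downOriented_and_tier_false_eq_zero_iff :
    ¬ DownOriented σ ∧ tier σ false = 0 ↔ NoSepPairs σ := by
  have h := noSepPairs_or_upOriented_or_downOriented σ
  simp only [noSepPairs_iff, upOriented_iff, downOriented_iff] at h ⊢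
  omega

lemma not_downOriented_and_tier_false_eq_succ_iff {t : ℕ} :
    ¬ DownOriented σ ∧ tier σ false = t + 1 ↔ UpOriented σ ∧ revTier σ = t := by
  have h := noSepPairs_or_upOriented_or_downOriented σ
  simp only [noSepPairs_iff, upOriented_iff, downOriented_iff, revTier_eq_tier] at h ⊢
  omega

end Orientation

/-! ### Chains and orientation after inserting a new minimum -/

section InsertMinChains

lemma altChain_insertMin_succ_iff (p : Fin (n + 1)) (τ : Perm (Fin n)) {b : Bool} {t : ℕ}
    {g : Fin t → Fin n} : AltChain (insertMin p τ) b (Fin.succ ∘ g) ↔ AltChain τ b g := by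
  simp only [altChain_iff, Function.comp_apply, orientedSepPair_insertMin_succ, StrictMono,
    Fin.succ_lt_succ_iff]

lemma exists_eq_succ_comp {ι : Type*} {f : ι → Fin (n + 1)} (hf : ∀ j, f j ≠ 0) :
    ∃ g : ι → Fin n, f = Fin.succ ∘ g :=
  ⟨fun j => (f j).pred (hf j), funext fun j => ((f j).succ_pred (hf j)).symm⟩

lemma hasAltChain_insertMin_succ_iff (p : Fin (n + 1)) (τ : Perm (Fin n)) (b : Bool) (t : ℕ) :
    HasAltChain (insertMin p τ) b (t + 1) ↔
      HasAltChain τ b (t + 1) ∨ OrientedSepPair (insertMin p τ) b 0 ∧ HasAltChain τ (!b) t := by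
  constructor
  · intro h
    obtain ⟨a, f, ha, hlt, hf⟩ := hasAltChain_succ_iff.1 h
    obtain ⟨g, rfl⟩ := exists_eq_succ_comp fun j => ((Fin.zero_le a).trans_lt (hlt j)).ne'
    rw [altChain_insertMin_succ_iff] at hf
    rcases Fin.eq_zero_or_eq_succ a with rfl | ⟨a, rfl⟩
    · exact .inr ⟨ha, g, hf⟩
    · exact .inl (hasAltChain_succ_iff.2 ⟨a, g, (orientedSepPair_insertMin_succ p τ b a).1 ha,
        fun j => Fin.succ_lt_succ_iff.1 (hlt j), hf⟩)
  · rintro (⟨g, hg⟩ | ⟨h₀, g, hg⟩)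
    · exact ⟨_, (altChain_insertMin_succ_iff p τ).2 hg⟩
    · exact hasAltChain_succ_iff.2
        ⟨0, _, h₀, fun j => (g j).succ_pos, (altChain_insertMin_succ_iff p τ).2 hg⟩

lemma tier_insertMin_of_orientedSepPair {p : Fin (n + 1)} {τ : Perm (Fin n)} {b : Bool}
    (h : OrientedSepPair (insertMin p τ) b 0) : tier (insertMin p τ) b = tier τ (!b) + 1 := by
  refine eq_of_forall_le_iff fun t => ?_
  rcases t with _ | t
  · simp only [Nat.zero_le]
  · have hle := tier_le_tier_not_add_one τ b
    simp only [← hasAltChain_iff_le_tier, hasAltChain_insertMin_succ_iff, h, true_and]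
    simp only [hasAltChain_iff_le_tier]
    omega

lemma tier_insertMin_of_not_orientedSepPair {p : Fin (n + 1)} {τ : Perm (Fin n)} {b : Bool}
    (h : ¬ OrientedSepPair (insertMin p τ) b 0) : tier (insertMin p τ) b = tier τ b := by
  refine eq_of_forall_le_iff fun t => ?_
  rcases t with _ | t
  · simp only [Nat.zero_le]
  · simp only [← hasAltChain_iff_le_tier, hasAltChain_insertMin_succ_iff, h, false_and, or_false]

variable (p : Fin (n + 2)) (τ : Perm (Fin (n + 1)))

lemma tier_insertMin_true : tier (insertMin p τ) true =
    if (τ.symm 0 : ℕ) + 1 < p then tier τ false + 1 else tier τ true := by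
  split_ifs with h <;> rw [← downSepPair_insertMin_zero] at h
  · exact tier_insertMin_of_orientedSepPair h
  · exact tier_insertMin_of_not_orientedSepPair h

lemma tier_insertMin_false : tier (insertMin p τ) false =
    if (p : ℕ) < τ.symm 0 then tier τ true + 1 else tier τ false := by
  split_ifs with h <;> rw [← upSepPair_insertMin_zero] at h
  · exact tier_insertMin_of_orientedSepPair h
  · exact tier_insertMin_of_not_orientedSepPair h

lemma noSepPairs_insertMin_iff : NoSepPairs (insertMin p τ) ↔
    NoSepPairs τ ∧ ((τ.symm 0 : ℕ) = p ∨ (τ.symm 0 : ℕ) + 1 = p) := by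
  simp only [noSepPairs_iff, tier_insertMin_true, tier_insertMin_false]
  split_ifs <;> grind

lemma upOriented_insertMin_and_revTier_eq_iff (t : ℕ) :
    UpOriented (insertMin p τ) ∧ revTier (insertMin p τ) = t ↔
      (¬ UpOriented τ ∧ revTier τ = t) ∧ (p : ℕ) < τ.symm 0 ∨
        (UpOriented τ ∧ revTier τ = t) ∧ (p : ℕ) ≤ τ.symm 0 + 1 := by
  simp only [upOriented_iff, revTier_eq_tier, tier_insertMin_true, tier_insertMin_false]
  split_ifs <;> omega

lemma downOriented_insertMin_and_revTier_eq_iff (t : ℕ) :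
    DownOriented (insertMin p τ) ∧ revTier (insertMin p τ) = t + 1 ↔
      (¬ DownOriented τ ∧ tier τ false = t) ∧ (τ.symm 0 : ℕ) + 1 < p ∨
        (DownOriented τ ∧ revTier τ = t + 1) ∧ (τ.symm 0 : ℕ) ≤ p := by
  simp only [downOriented_iff, revTier_eq_tier, tier_insertMin_true, tier_insertMin_false]
  split_ifs <;> omega

end InsertMinChains

/-! ### Counting by the position of the smallest entry -/

section Counting

/-- The number of permutations of length `n` that satisfy `P` and have entry `1` in (1-indexed)
position `k`: the common form of `eta`, `muU` and `muD`. -/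
noncomputable def cardOnePos (P : Perm (Fin n) → Prop) (k : ℕ) : ℕ :=
  Nat.card {σ : Perm (Fin n) // P σ ∧ onePos σ k}

lemma eta_eq_cardOnePos (n k : ℕ) : eta n k = cardOnePos (n := n) NoSepPairs k := rfl

lemma muU_eq_cardOnePos (n t k : ℕ) :
    muU n t k = cardOnePos (fun σ : Perm (Fin n) => UpOriented σ ∧ revTier σ = t) k := by
  simp only [muU, cardOnePos, and_assoc]

lemma muD_eq_cardOnePos (n t k : ℕ) :
    muD n t k = cardOnePos (fun σ : Perm (Fin n) => DownOriented σ ∧ revTier σ = t) k := by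
  simp only [muD, cardOnePos, and_assoc]

lemma onePos_iff {σ : Perm (Fin (n + 1))} {k : ℕ} : onePos σ k ↔ (σ.symm 0 : ℕ) + 1 = k :=
  ⟨fun h => h n.succ_pos, fun h _ => h⟩

lemma cardOnePos_eq_card_insertMin (p : Fin (n + 1)) (P : Perm (Fin (n + 1)) → Prop) :
    cardOnePos P (p + 1) = Nat.card {τ : Perm (Fin n) // P (insertMin p τ)} := by
  refine (Nat.card_eq_of_bijective
    (fun τ => ⟨insertMin p τ.1, τ.2, onePos_iff.2 (by rw [insertMin_symm_zero])⟩) ⟨?_, ?_⟩).symm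
  · exact fun τ τ' h => Subtype.ext (insertMin_injective p (congrArg Subtype.val h))
  · rintro ⟨σ, hP, hσ⟩
    obtain ⟨τ, hτ⟩ := exists_insertMin_eq σ
    obtain rfl : σ.symm 0 = p := Fin.ext (Nat.succ_injective (onePos_iff.1 hσ))
    exact ⟨⟨τ, hτ.symm ▸ hP⟩, Subtype.ext hτ⟩

lemma sum_cardOnePos (P : Perm (Fin (n + 1)) → Prop) (S : Finset ℕ) :
    ∑ i ∈ S, cardOnePos P i =
      Nat.card {τ : Perm (Fin (n + 1)) // P τ ∧ (τ.symm 0 : ℕ) + 1 ∈ S} := by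
  classical
  simp only [cardOnePos, onePos_iff, Nat.card_eq_fintype_card, Fintype.card_subtype]
  rw [Finset.card_eq_sum_card_fiberwise (f := fun τ => (τ.symm 0 : ℕ) + 1) (t := S)
    fun τ hτ => (Finset.mem_filter.1 hτ).2.2]
  refine Finset.sum_congr rfl fun i hi => congrArg Finset.card ?_
  rw [Finset.filter_filter]
  refine Finset.filter_congr fun τ _ => ?_
  constructor
  · rintro ⟨hP, rfl⟩
    exact ⟨⟨hP, hi⟩, rfl⟩
  · exact fun ⟨⟨hP, _⟩, h⟩ => ⟨hP, h⟩

lemma card_subtype_or_of_disjoint {α : Type*} [Finite α] {A B : α → Prop}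
    (h : ∀ x, A x → ¬ B x) :
    Nat.card {x // A x ∨ B x} = Nat.card {x // A x} + Nat.card {x // B x} := by
  classical
  have disjoint : Disjoint A B :=
    Pi.disjoint_iff.2 fun x => Prop.disjoint_iff.2 (not_and.2 (h x))
  rw [Nat.card_congr (subtypeOrEquiv A B disjoint), Nat.card_sum]

lemma cardOnePos_eq_sum_add_sum (p : Fin (n + 2)) {P : Perm (Fin (n + 2)) → Prop}
    {A B : Perm (Fin (n + 1)) → Prop} {S T : Finset ℕ} (hAB : ∀ τ, A τ → ¬ B τ)
    (h : ∀ τ, P (insertMin p τ) ↔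
      A τ ∧ (τ.symm 0 : ℕ) + 1 ∈ S ∨ B τ ∧ (τ.symm 0 : ℕ) + 1 ∈ T) :
    cardOnePos P (p + 1) = ∑ i ∈ S, cardOnePos A i + ∑ i ∈ T, cardOnePos B i := by
  simp only [cardOnePos_eq_card_insertMin, sum_cardOnePos, h]
  exact card_subtype_or_of_disjoint fun τ hA hB => hAB τ hA.1 hB.1

end Counting

/-! ### The recurrences -/

section Recurrences

variable (p : Fin (n + 2))

theorem eta_add_two : eta (n + 2) (p + 1) = eta (n + 1) (p + 1) + eta (n + 1) p := by
  rw [← Finset.sum_pair (p : ℕ).succ_ne_self]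
  simp only [eta_eq_cardOnePos, cardOnePos_eq_card_insertMin, sum_cardOnePos,
    noSepPairs_insertMin_iff, Finset.mem_insert, Finset.mem_singleton, Nat.succ_inj]

theorem muU_add_two (t : ℕ) :
    muU (n + 2) t (p + 1) =
      ∑ i ∈ Finset.Icc (p + 2 : ℕ) (n + 1),
        cardOnePos (fun τ : Perm (Fin (n + 1)) => ¬ UpOriented τ ∧ revTier τ = t) i +
      ∑ i ∈ Finset.Icc (max 1 p : ℕ) (n + 1), muU (n + 1) t i := by
  simp only [muU_eq_cardOnePos]
  refine cardOnePos_eq_sum_add_sum p (fun τ h h' => h.1 h'.1) fun τ => ?_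
  have mem_right : (τ.symm 0 : ℕ) + 1 ∈ Finset.Icc (p + 2 : ℕ) (n + 1) ↔ (p : ℕ) < τ.symm 0 := by
    rw [Finset.mem_Icc]
    omega
  have mem_right_or_adjacent :
      (τ.symm 0 : ℕ) + 1 ∈ Finset.Icc (max 1 p : ℕ) (n + 1) ↔ (p : ℕ) ≤ τ.symm 0 + 1 := by
    rw [Finset.mem_Icc]
    omega
  rw [upOriented_insertMin_and_revTier_eq_iff, mem_right, mem_right_or_adjacent]

theorem muU_add_two_zero :
    muU (n + 2) 0 (p + 1) =
      ∑ i ∈ Finset.Icc (p + 2 : ℕ) (n + 1), eta (n + 1) i +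
      ∑ i ∈ Finset.Icc (max 1 p : ℕ) (n + 1), muU (n + 1) 0 i := by
  simp only [muU_add_two, not_upOriented_and_revTier_eq_zero_iff, eta_eq_cardOnePos]

theorem muU_add_two_of_pos {t : ℕ} (ht : 1 ≤ t) :
    muU (n + 2) t (p + 1) =
      ∑ i ∈ Finset.Icc (p + 2 : ℕ) (n + 1), muD (n + 1) t i +
      ∑ i ∈ Finset.Icc (max 1 p : ℕ) (n + 1), muU (n + 1) t i := by
  simp only [muU_add_two, not_upOriented_and_revTier_eq_iff _ ht, muD_eq_cardOnePos]

theorem muD_add_two_succ (t : ℕ) :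
    muD (n + 2) (t + 1) (p + 1) =
      ∑ i ∈ Finset.Icc 1 (p - 1 : ℕ),
        cardOnePos (fun τ : Perm (Fin (n + 1)) => ¬ DownOriented τ ∧ tier τ false = t) i +
      ∑ i ∈ Finset.Icc 1 (min (p + 1) (n + 1) : ℕ), muD (n + 1) (t + 1) i := by
  simp only [muD_eq_cardOnePos]
  refine cardOnePos_eq_sum_add_sum p (fun τ h h' => h.1 h'.1) fun τ => ?_
  have mem_left : (τ.symm 0 : ℕ) + 1 ∈ Finset.Icc 1 (p - 1 : ℕ) ↔ (τ.symm 0 : ℕ) + 1 < p := by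
    rw [Finset.mem_Icc]
    omega
  have mem_left_or_adjacent :
      (τ.symm 0 : ℕ) + 1 ∈ Finset.Icc 1 (min (p + 1) (n + 1) : ℕ) ↔ (τ.symm 0 : ℕ) ≤ p := by
    rw [Finset.mem_Icc]
    omega
  rw [downOriented_insertMin_and_revTier_eq_iff, mem_left, mem_left_or_adjacent]

theorem muD_add_two_one :
    muD (n + 2) 1 (p + 1) =
      ∑ i ∈ Finset.Icc 1 (p - 1 : ℕ), eta (n + 1) i +
      ∑ i ∈ Finset.Icc 1 (min (p + 1) (n + 1) : ℕ), muD (n + 1) 1 i := by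
  simp only [muD_add_two_succ p 0, not_downOriented_and_tier_false_eq_zero_iff, eta_eq_cardOnePos]

theorem muD_add_two_add_two (t : ℕ) :
    muD (n + 2) (t + 2) (p + 1) =
      ∑ i ∈ Finset.Icc 1 (p - 1 : ℕ), muU (n + 1) t i +
      ∑ i ∈ Finset.Icc 1 (min (p + 1) (n + 1) : ℕ), muD (n + 1) (t + 2) i := by
  simp only [muD_add_two_succ p (t + 1), not_downOriented_and_tier_false_eq_succ_iff,
    muU_eq_cardOnePos]

end Recurrences

end

/-- the recurrences for `η`, `μ_U` and `μ_D` (all sums over `1 ≤ i ≤ n`). -/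
theorem mu_recurrences (n k : ℕ) (hn : 1 ≤ n) (hk : 1 ≤ k) (hkn : k ≤ n + 1) :
    eta (n + 1) k = eta n k + eta n (k - 1) ∧
    muU (n + 1) 0 k =
      (∑ i ∈ Finset.Icc (k + 1) n, eta n i) +
        ∑ i ∈ Finset.Icc (max 1 (k - 1)) n, muU n 0 i ∧
    (∀ t : ℕ, 1 ≤ t →
      muU (n + 1) t k =
        (∑ i ∈ Finset.Icc (k + 1) n, muD n t i) +
          ∑ i ∈ Finset.Icc (max 1 (k - 1)) n, muU n t i) ∧
    muD (n + 1) 1 k =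
      (∑ i ∈ Finset.Icc 1 (k - 2), eta n i) +
        ∑ i ∈ Finset.Icc 1 (min k n), muD n 1 i ∧
    (∀ t : ℕ, 2 ≤ t →
      muD (n + 1) t k =
        (∑ i ∈ Finset.Icc 1 (k - 2), muU n (t - 2) i) +
          ∑ i ∈ Finset.Icc 1 (min k n), muD n t i) := by
  obtain ⟨m, rfl⟩ := Nat.exists_eq_add_of_le' hn
  obtain ⟨p, rfl⟩ : ∃ p : Fin (m + 2), k = p + 1 :=
    ⟨⟨k - 1, by omega⟩, (Nat.sub_add_cancel hk).symm⟩
  refine ⟨eta_add_two p, muU_add_two_zero p, fun t ht => muU_add_two_of_pos p ht,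
    muD_add_two_one p, fun t ht => ?_⟩
  obtain ⟨s, rfl⟩ := Nat.exists_eq_add_of_le' ht
  exact muD_add_two_add_two p s
end
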